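/- Let C₄ > 1/2, M± = 2C₄ ± √(4C₄² − 1), G₋ = (1 − M₊²)/4 and G₊ = (1 − M₋²)/4 (so that G₋ < 0 < G₊), and for η ∈ (G₋, G₊) define F(η) = √((2η − 1)/2 + C₄·√(1 − 4η)) (the expression under the square root is positive on (G₋, G₊) and vanishes at the endpoints). Then ∫_{G₋}^{G₊} dη / ((1 − 4η)·F(η)) = π. -/

import Mathlib

/-! In the variable `m = √(1 - 4η)` the radicand of `F` is the quadratic
`(m - M₋)(M₊ - m) / 4` with `M₋ M₊ = 1`, and the period integral becomes
`∫ dm / (m √((m - M₋)(M₊ - m)))` over `[M₋, M₊]`. The involution `m ↦ M₋ M₊ / m` of this interval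
removes the factor `m`, leaving the total mass `π` of the arcsine law. -/

open Real Set

section IntervalIntegrals

variable {a b : ℝ}

lemma integral_one_div_sqrt_sub_mul_sub (hab : a < b) :
    ∫ x in a..b, 1 / √((x - a) * (b - x)) = π := by
  set r := (b - a) / 2 with hr
  have r_pos : 0 < r := by linarith
  let x : ℝ → ℝ := fun θ => (a + b) / 2 - r * cos θ
  have hderiv : ∀ θ, HasDerivAt x (r * sin θ) θ := fun θ => by
    simpa using ((hasDerivAt_cos θ).const_mul r).const_sub ((a + b) / 2)
  have hsin : ∀ θ ∈ Ioo 0 π, 0 < sin θ := fun θ hθ => sin_pos_of_mem_Ioo hθ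
  have hx₀ : x 0 = a := by simp only [x, hr, cos_zero]; ring
  have hxπ : x π = b := by simp only [x, hr, cos_pi]; ring
  have hsqrt : ∀ θ ∈ Ioo 0 π, √((x θ - a) * (b - x θ)) = r * sin θ := fun θ hθ => by
    rw [show (x θ - a) * (b - x θ) = (r * sin θ) ^ 2 by
      simp only [x, hr]; linear_combination (-(b - a) ^ 2 / 4) * sin_sq_add_cos_sq θ]
    exact sqrt_sq (mul_pos r_pos (hsin θ hθ)).le
  calc ∫ x in a..b, 1 / √((x - a) * (b - x))
      = ∫ θ in (0)..π, 1 / √((x θ - a) * (b - x θ)) * (r * sin θ) := by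
        rw [← hx₀, ← hxπ]
        refine (intervalIntegral.integral_comp_mul_deriv_of_deriv_nonneg
          (fun θ _ => (hderiv θ).continuousAt.continuousWithinAt) (fun θ _ => hderiv θ) ?_).symm
        rw [min_eq_left pi_pos.le, max_eq_right pi_pos.le]
        exact fun θ hθ => (mul_pos r_pos (hsin θ hθ)).le
    _ = ∫ _ in (0)..π, (1 : ℝ) := by
        refine intervalIntegral.integral_congr_Ioo_of_le pi_pos.le fun θ hθ => ?_
        have := hsin θ hθ
        simp only [hsqrt θ hθ]
        field_simp
    _ = π := by simp

lemma integral_eq_integral_comp_mul_div (ha : 0 < a) (hab : a ≤ b) (g : ℝ → ℝ) :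
    ∫ x in a..b, g x = ∫ y in a..b, g (a * b / y) * (a * b / y ^ 2) := by
  have hb : 0 < b := ha.trans_le hab
  have hderiv : ∀ y ∈ Icc a b, HasDerivAt (fun y => a * b / y) (-(a * b / y ^ 2)) y :=
    fun y hy => by
      simpa [div_eq_mul_inv] using (hasDerivAt_inv (ha.trans_le hy.1).ne').const_mul (a * b)
  have hsubst := intervalIntegral.integral_comp_mul_deriv_of_deriv_nonpos
    (a := a) (b := b) (f := fun y => a * b / y) (f' := fun y => -(a * b / y ^ 2)) (g := g)
    (fun y hy => (hderiv y (uIcc_of_le hab ▸ hy)).continuousAt.continuousWithinAt)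
    (fun y hy => hderiv y (by
      rw [min_eq_left hab, max_eq_right hab] at hy
      exact Ioo_subset_Icc_self hy))
    (fun y _ => neg_nonpos.2 (by positivity))
  simp only [Function.comp_apply, mul_neg, intervalIntegral.integral_neg,
    mul_div_cancel_left₀ b ha.ne', mul_div_cancel_right₀ a hb.ne'] at hsubst
  rw [intervalIntegral.integral_symm, ← hsubst, neg_neg]

lemma sqrt_mul_div_sub_mul_sub_mul_div (ha : 0 ≤ a) (hb : 0 ≤ b) {y : ℝ} (hy : 0 < y) :
    √((a * b / y - a) * (b - a * b / y)) = √(a * b) * √((y - a) * (b - y)) / y := by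
  rw [← sqrt_mul (mul_nonneg ha hb), ← sqrt_sq hy.le, ← sqrt_div' _ (sq_nonneg y),
    sqrt_sq hy.le]
  congr 1
  field_simp

lemma integral_one_div_mul_sqrt_sub_mul_sub (ha : 0 < a) (hab : a < b) :
    ∫ x in a..b, 1 / (x * √((x - a) * (b - x))) = π / √(a * b) := by
  have hb : 0 < b := ha.trans hab
  calc ∫ x in a..b, 1 / (x * √((x - a) * (b - x)))
      = ∫ y in a..b, 1 / (a * b / y * √((a * b / y - a) * (b - a * b / y))) *
          (a * b / y ^ 2) := integral_eq_integral_comp_mul_div ha hab.le _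
    _ = ∫ y in a..b, 1 / √((y - a) * (b - y)) / √(a * b) := by
        refine intervalIntegral.integral_congr fun y hy => ?_
        rw [uIcc_of_le hab.le] at hy
        have y_pos : 0 < y := ha.trans_le hy.1
        simp only [sqrt_mul_div_sub_mul_sub_mul_div ha.le hb.le y_pos]
        field_simp
    _ = π / √(a * b) := by
        rw [intervalIntegral.integral_div, integral_one_div_sqrt_sub_mul_sub hab]

lemma integral_comp_sqrt (ha : 0 ≤ a) (hab : a ≤ b) (f : ℝ → ℝ) :
    ∫ u in a ^ 2..b ^ 2, f √u = ∫ m in a..b, f m * (2 * m) := by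
  have hderiv : ∀ m : ℝ, HasDerivAt (fun m => m ^ 2) (2 * m) m := fun m => by
    simpa using hasDerivAt_pow 2 m
  rw [← intervalIntegral.integral_comp_mul_deriv_of_deriv_nonneg
    (f := fun m => m ^ 2) (f' := fun m => 2 * m) (g := fun u => f √u)
    (fun m _ => (hderiv m).continuousAt.continuousWithinAt) (fun m _ => hderiv m)
    (fun m hm => by rw [min_eq_left hab] at hm; linarith [hm.1])]
  refine intervalIntegral.integral_congr fun m hm => ?_
  rw [uIcc_of_le hab] at hm
  simp only [Function.comp_apply, sqrt_sq (ha.trans hm.1)]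

end IntervalIntegrals

section Radicand

/-- The expression under the square root that defines `F`, which vanishes at the turning points
`G₋` and `G₊` of an orbit with first-integral constant `C`. -/
noncomputable def radicand (C η : ℝ) : ℝ := (2 * η - 1) / 2 + C * √(1 - 4 * η)

variable {a b C : ℝ}

lemma radicand_eq_sub_mul_sub_div_four (hadd : a + b = 4 * C) (hmul : a * b = 1) {η : ℝ}
    (hη : 0 ≤ 1 - 4 * η) :
    radicand C η = (√(1 - 4 * η) - a) * (b - √(1 - 4 * η)) / 4 := by
  rw [radicand]
  linear_combination (1 / 4) * sq_sqrt hη - √(1 - 4 * η) / 4 * hadd + hmul / 4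

lemma radicand_one_sub_sq_div_four_eq_zero {m : ℝ} (hm : 0 ≤ m) (hroot : m ^ 2 + 1 = 4 * C * m) :
    radicand C ((1 - m ^ 2) / 4) = 0 := by
  rw [radicand, show 1 - 4 * ((1 - m ^ 2) / 4) = m ^ 2 by ring, sqrt_sq hm]
  linear_combination -hroot / 4

lemma radicand_pos (hadd : a + b = 4 * C) (hmul : a * b = 1) (ha : 0 < a) {η : ℝ}
    (hη : η ∈ Ioo ((1 - b ^ 2) / 4) ((1 - a ^ 2) / 4)) : 0 < radicand C η := by
  have hb : 0 < b := pos_of_mul_pos_right (hmul ▸ one_pos) ha.le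
  have a_lt_sqrt : a < √(1 - 4 * η) := lt_sqrt_of_sq_lt (by linarith [hη.2])
  have sqrt_lt_b : √(1 - 4 * η) < b := (sqrt_lt' hb).2 (by linarith [hη.1])
  rw [radicand_eq_sub_mul_sub_div_four hadd hmul (sqrt_pos.1 (ha.trans a_lt_sqrt)).le]
  exact div_pos (mul_pos (sub_pos.2 a_lt_sqrt) (sub_pos.2 sqrt_lt_b)) four_pos

lemma integral_one_div_one_sub_four_mul_mul_sqrt_radicand (hadd : a + b = 4 * C)
    (hmul : a * b = 1) (ha : 0 < a) (hab : a < b) :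
    ∫ η in (1 - b ^ 2) / 4..(1 - a ^ 2) / 4, 1 / ((1 - 4 * η) * √(radicand C η)) = π := by
  have endpoints_le : (1 - b ^ 2) / 4 ≤ (1 - a ^ 2) / 4 := by
    linarith [pow_le_pow_left₀ ha.le hab.le 2]
  let g : ℝ → ℝ := fun m => 1 / (m ^ 2 * √((m - a) * (b - m) / 4))
  calc ∫ η in (1 - b ^ 2) / 4..(1 - a ^ 2) / 4, 1 / ((1 - 4 * η) * √(radicand C η))
      = ∫ η in (1 - b ^ 2) / 4..(1 - a ^ 2) / 4, g √(1 - 4 * η) := by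
        refine intervalIntegral.integral_congr fun η hη => ?_
        rw [uIcc_of_le endpoints_le] at hη
        have hη₀ : 0 ≤ 1 - 4 * η := by linarith [hη.2, sq_nonneg a]
        simp only [g, sq_sqrt hη₀, radicand_eq_sub_mul_sub_div_four hadd hmul hη₀]
    _ = 4⁻¹ * ∫ u in a ^ 2..b ^ 2, g √u := by
        rw [intervalIntegral.integral_comp_sub_mul (fun u => g √u) four_ne_zero, smul_eq_mul]
        congr 2 <;> ring
    _ = ∫ m in a..b, 4⁻¹ * (g m * (2 * m)) := by
        rw [integral_comp_sqrt ha.le hab.le, intervalIntegral.integral_const_mul]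
    _ = ∫ m in a..b, 1 / (m * √((m - a) * (b - m))) := by
        refine intervalIntegral.integral_congr fun m hm => ?_
        rw [uIcc_of_le hab.le] at hm
        have m_pos : 0 < m := ha.trans_le hm.1
        have sqrt_four : √(4 : ℝ) = 2 := by rw [sqrt_eq_iff_mul_self_eq] <;> norm_num
        simp only [g, sqrt_div' _ (zero_le_four (α := ℝ)), sqrt_four]
        field_simp
        norm_num
    _ = π := by rw [integral_one_div_mul_sqrt_sub_mul_sub ha hab, hmul, sqrt_one, div_one]

end Radicand

/-- The period computation for the orbits of the `d = 4` characteristic system.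
With `C₄ > 1/2`, `M± = 2C₄ ± √(4C₄² − 1)`, `G₋ = (1 − M₊²)/4 < 0 < G₊ = (1 − M₋²)/4`, and
`F(η) = √((2η − 1)/2 + C₄√(1 − 4η))` (positive inside `(G₋, G₊)` and vanishing at the
endpoints), one has `∫_{G₋}^{G₊} dη/((1 − 4η)F(η)) = π`. -/
theorem half_period_integral_d4
    (C₄ : ℝ) (hC₄ : 1 / 2 < C₄)
    (Mp Mm Gm Gp : ℝ)
    (hMp : Mp = 2 * C₄ + Real.sqrt (4 * C₄ ^ 2 - 1))
    (hMm : Mm = 2 * C₄ - Real.sqrt (4 * C₄ ^ 2 - 1))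
    (hGm : Gm = (1 - Mp ^ 2) / 4)
    (hGp : Gp = (1 - Mm ^ 2) / 4)
    (F : ℝ → ℝ)
    (hF : ∀ η, F η = Real.sqrt ((2 * η - 1) / 2 + C₄ * Real.sqrt (1 - 4 * η))) :
    Gm < 0 ∧ 0 < Gp ∧
    (∀ η ∈ Set.Ioo Gm Gp, 0 < (2 * η - 1) / 2 + C₄ * Real.sqrt (1 - 4 * η)) ∧
    (2 * Gm - 1) / 2 + C₄ * Real.sqrt (1 - 4 * Gm) = 0 ∧
    (2 * Gp - 1) / 2 + C₄ * Real.sqrt (1 - 4 * Gp) = 0 ∧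
    (∫ η in Gm..Gp, 1 / ((1 - 4 * η) * F η)) = Real.pi := by
  have root_pos : 0 < √(4 * C₄ ^ 2 - 1) := sqrt_pos.2 (by nlinarith)
  have hadd : Mm + Mp = 4 * C₄ := by rw [hMm, hMp]; ring
  have hmul : Mm * Mp = 1 := by
    rw [hMm, hMp]
    linear_combination -sq_sqrt (sqrt_pos.1 root_pos).le
  have Mm_lt_Mp : Mm < Mp := by linarith
  have Mp_pos : 0 < Mp := by linarith
  have Mm_pos : 0 < Mm := pos_of_mul_pos_left (hmul ▸ one_pos) Mp_pos.le
  have one_lt_Mp : 1 < Mp := by nlinarith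
  have Mm_lt_one : Mm < 1 := by nlinarith
  simp only [hF]
  subst hGm hGp
  exact ⟨by linarith [one_lt_pow₀ one_lt_Mp two_ne_zero],
    by linarith [pow_lt_one₀ Mm_pos.le Mm_lt_one two_ne_zero],
    fun η => radicand_pos hadd hmul Mm_pos,
    radicand_one_sub_sq_div_four_eq_zero Mp_pos.le
      (by linear_combination Mp * hadd - hmul),
    radicand_one_sub_sq_div_four_eq_zero Mm_pos.le
      (by linear_combination Mm * hadd - hmul),
    integral_one_div_one_sub_four_mul_mul_sqrt_radicand hadd hmul Mm_pos Mm_lt_Mp⟩
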